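/- Fix h ∈ 𝔥. Let 𝔥' and 𝔥'' be regular subspaces of 𝔥 with dim 𝔥' = dim 𝔥'', and set h' = P_{𝔥'}(h) and h'' = P_{𝔥''}(h). Assume h' ∉ {0, h} and h'' ∉ {0, h}. Then there exists σ ∈ O(𝔥) with σ(h) = h, σ(𝔥') = 𝔥'', and σ(h') = h'' if and only if ⟨h',h'⟩ = ⟨h'',h''⟩. -/

import Mathlib

/-- A subspace `W` is regular if the restriction of the bilinear form `B` to `W`
is nondegenerate. -/
def IsRegularSubspace {V : Type*} [AddCommGroup V] [Module ℂ V]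
    (B : LinearMap.BilinForm ℂ V) (W : Submodule ℂ V) : Prop :=
  ∀ x ∈ W, (∀ y ∈ W, B x y = 0) → x = 0

/-- `IsOrthProj B W x y` : `y` is the orthogonal projection `P_W(x)` of `x` onto `W`. -/
def IsOrthProj {V : Type*} [AddCommGroup V] [Module ℂ V]
    (B : LinearMap.BilinForm ℂ V) (W : Submodule ℂ V) (x y : V) : Prop :=
  y ∈ W ∧ ∀ w ∈ W, B (x - y) w = 0

/-!
An isometry fixing `h` and carrying `(W, h')` to `(W', h'')` is the same as a pair of isometries
`W ≃ W'` and `Wᗮ ≃ W'ᗮ` carrying `h'` to `h''` and `h - h'` to `h - h''`. Over an algebraically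
closed field of characteristic not `2`, nondegenerate symmetric forms are classified by dimension,
so both pairs of spaces are isometric, and by the rank one case of Witt's theorem the isometry
group of each is transitive on nonzero vectors of a given norm. Finally
`⟨h - h', h - h'⟩ = ⟨h, h⟩ - ⟨h', h'⟩`, so the single condition on `h'` and `h''` controls both
norms.
-/

section IsometryEquiv

open LinearMap (BilinForm)
open LinearMap.BilinForm

section Transitivity

theorem exists_map_ne_zero_and_map_ne_zero {G A B : Type*} [AddZeroClass G] [AddZeroClass A]
    [AddZeroClass B] {f : G →+ A} {g : G →+ B} (hf : f ≠ 0) (hg : g ≠ 0) :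
    ∃ x, f x ≠ 0 ∧ g x ≠ 0 := by
  obtain ⟨a, hfa⟩ := DFunLike.ne_iff.1 hf
  obtain ⟨b, hgb⟩ := DFunLike.ne_iff.1 hg
  by_cases hga : g a = 0
  · by_cases hfb : f b = 0
    · exact ⟨a + b, by simpa [hfb] using hfa, by simpa [hga] using hgb⟩
    · exact ⟨b, hfb, hgb⟩
  · exact ⟨a, hfa, hga⟩

variable {K V : Type*} [Field K] [AddCommGroup V] [Module K V] {B : BilinForm K V} {u v x : V}

theorem exists_isometryEquiv_apply_eq_of_sub_anisotropic (hB : B.IsSymm) (huv : B u u = B v v)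
    (hsub : B (u - v) (u - v) ≠ 0) : ∃ σ : B.IsometryEquiv B, σ u = v := by
  have hrefl : LinearMap.IsReflective B (u - v) :=
    ⟨.of_ne_zero hsub, fun _ ↦ (Ne.isUnit hsub).dvd⟩
  refine ⟨⟨Module.reflection (hrefl.coroot_apply_self B),
    hrefl.isOrthogonal_reflection B (isSymm_iff.1 hB)⟩, ?_⟩
  have hcoroot : hrefl.coroot B u = 1 := by
    refine mul_left_cancel₀ hsub ?_
    rw [hrefl.apply_self_mul_coroot_apply]
    simp only [map_sub, LinearMap.sub_apply, hB.eq v u]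
    linear_combination huv
  change Module.reflection (hrefl.coroot_apply_self B) u = v
  rw [Module.reflection_apply, hcoroot, one_smul, sub_sub_cancel]

variable [NeZero (2 : K)]

theorem exists_apply_add_smul_self_eq_zero (hB : B.IsSymm) (hu : B u u = 0) (hux : B u x ≠ 0) :
    ∃ c : K, B (x + c • u) (x + c • u) = 0 := by
  have h2 : (2 : K) ≠ 0 := two_ne_zero
  refine ⟨-B x x / (2 * B u x), ?_⟩
  simp only [map_add, map_smul, LinearMap.add_apply, LinearMap.smul_apply, smul_eq_mul, hu,
    hB.eq x u]
  field_simp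
  ring

theorem exists_isometryEquiv_apply_eq_of_isotropic_of_ne_zero (hB : B.IsSymm) (huu : B u u = 0)
    (hvv : B v v = 0) (huv : B u v ≠ 0) : ∃ σ : B.IsometryEquiv B, σ u = v := by
  have hsub : B (u - v) (u - v) = -2 * B u v := by
    simp only [map_sub, LinearMap.sub_apply, huu, hvv, hB.eq v u]
    ring
  refine exists_isometryEquiv_apply_eq_of_sub_anisotropic hB (huu.trans hvv.symm) ?_
  exact hsub ▸ mul_ne_zero (neg_ne_zero.2 two_ne_zero) huv

theorem exists_isometryEquiv_apply_eq_of_isotropic_of_isOrtho (hB : B.IsSymm)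
    (hnd : B.SeparatingLeft) (hu : u ≠ 0) (hv : v ≠ 0) (huu : B u u = 0) (hvv : B v v = 0)
    (huv : B u v = 0) : ∃ σ : B.IsometryEquiv B, σ u = v := by
  have toAddMonoidHom_ne_zero {y : V} (hy : y ≠ 0) : (B y).toAddMonoidHom ≠ 0 :=
    fun h ↦ hy (hnd y (DFunLike.congr_fun h))
  obtain ⟨x, hux, hvx⟩ :=
    exists_map_ne_zero_and_map_ne_zero (toAddMonoidHom_ne_zero hu) (toAddMonoidHom_ne_zero hv)
  obtain ⟨c, hww⟩ := exists_apply_add_smul_self_eq_zero hB huu hux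
  -- No reflection takes `u` to `v`, as `u - v` is isotropic; reflect `u` to `w` and `w` to `v`.
  set w := x + c • u
  have huw : B u w ≠ 0 := by simpa [w, huu] using hux
  have hwv : B w v ≠ 0 := by simpa [w, huv, hB.eq x v] using hvx
  obtain ⟨σ, hσ⟩ := exists_isometryEquiv_apply_eq_of_isotropic_of_ne_zero hB huu hww huw
  obtain ⟨τ, hτ⟩ := exists_isometryEquiv_apply_eq_of_isotropic_of_ne_zero hB hww hvv hwv
  exact ⟨σ.trans τ, (congrArg τ hσ).trans hτ⟩

theorem exists_isometryEquiv_apply_eq (hB : B.IsSymm) (hnd : B.SeparatingLeft)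
    (huv : B u u = B v v) (hzero : u = 0 ↔ v = 0) : ∃ σ : B.IsometryEquiv B, σ u = v := by
  rcases eq_or_ne u 0 with rfl | hu
  · exact ⟨.refl B, (hzero.1 rfl).symm⟩
  by_cases hsub : B (u - v) (u - v) = 0
  · by_cases hadd : B (u + v) (u + v) = 0
    · simp only [map_sub, map_add, LinearMap.sub_apply, LinearMap.add_apply, hB.eq v u, ← huv]
        at hsub hadd
      have h2 : (2 : K) ≠ 0 := two_ne_zero
      have huu : B u u = 0 :=
        mul_left_cancel₀ (mul_ne_zero h2 h2) (by linear_combination hsub + hadd)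
      have huv' : B u v = 0 :=
        mul_left_cancel₀ (mul_ne_zero h2 h2) (by linear_combination hadd - hsub)
      exact exists_isometryEquiv_apply_eq_of_isotropic_of_isOrtho hB hnd hu (hzero.not.1 hu) huu
        (huv ▸ huu) huv'
    · obtain ⟨σ, hσ⟩ := exists_isometryEquiv_apply_eq_of_sub_anisotropic (u := u) (v := -v) hB
        (by simpa using huv) (by simpa using hadd)
      exact ⟨σ.trans ⟨LinearEquiv.neg K, by simp⟩, (congrArg Neg.neg hσ).trans (neg_neg v)⟩
  · exact exists_isometryEquiv_apply_eq_of_sub_anisotropic hB huv hsub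

end Transitivity

section Classification

theorem equivalent_associated {R M₁ M₂ : Type*} [CommRing R] [Invertible (2 : R)]
    [AddCommGroup M₁] [AddCommGroup M₂] [Module R M₁] [Module R M₂]
    {Q₁ : QuadraticForm R M₁} {Q₂ : QuadraticForm R M₂} (h : Q₁.Equivalent Q₂) :
    Equivalent (QuadraticMap.associated Q₁) (QuadraticMap.associated Q₂) :=
  h.elim fun f ↦ ⟨⟨f.toLinearEquiv, fun x y ↦ by
    simp [QuadraticMap.associated_apply, ← map_add]⟩⟩

variable {K V₁ V₂ : Type*} [Field K] [IsAlgClosed K] [NeZero (2 : K)]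
  [AddCommGroup V₁] [Module K V₁] [FiniteDimensional K V₁]
  [AddCommGroup V₂] [Module K V₂] [FiniteDimensional K V₂]
  {B₁ : BilinForm K V₁} {B₂ : BilinForm K V₂}

theorem equivalent_of_finrank_eq (hB₁ : B₁.IsSymm) (hB₂ : B₂.IsSymm) (hnd₁ : B₁.SeparatingLeft)
    (hnd₂ : B₂.SeparatingLeft) (hdim : Module.finrank K V₁ = Module.finrank K V₂) :
    B₁.Equivalent B₂ := by
  let _ : Invertible (2 : K) := invertibleOfNonzero two_ne_zero
  have hassoc₁ := QuadraticMap.associated_left_inverse K hB₁.eq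
  have hassoc₂ := QuadraticMap.associated_left_inverse K hB₂.eq
  have hQ₁ := QuadraticForm.equivalent_weightedSumSquares_of_isAlgClosed B₁.toQuadraticMap
    (hassoc₁.symm ▸ hnd₁)
  have hQ₂ := QuadraticForm.equivalent_weightedSumSquares_of_isAlgClosed B₂.toQuadraticMap
    (hassoc₂.symm ▸ hnd₂)
  rw [hdim] at hQ₁
  exact hassoc₁ ▸ hassoc₂ ▸ equivalent_associated (hQ₁.trans hQ₂.symm)

theorem exists_isometryEquiv_apply_eq_of_finrank_eq (hB₁ : B₁.IsSymm) (hB₂ : B₂.IsSymm)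
    (hnd₁ : B₁.SeparatingLeft) (hnd₂ : B₂.SeparatingLeft)
    (hdim : Module.finrank K V₁ = Module.finrank K V₂) {u : V₁} {v : V₂}
    (huv : B₁ u u = B₂ v v) (hzero : u = 0 ↔ v = 0) : ∃ σ : B₁.IsometryEquiv B₂, σ u = v := by
  obtain ⟨σ⟩ := equivalent_of_finrank_eq hB₁ hB₂ hnd₁ hnd₂ hdim
  obtain ⟨τ, hτ⟩ := exists_isometryEquiv_apply_eq (u := σ u) (v := v) hB₂ hnd₂
    (by rw [σ.map_app, huv]) (by rw [EmbeddingLike.map_eq_zero_iff, hzero])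
  exact ⟨σ.trans τ, hτ⟩

end Classification

section Gluing

theorem map_eq_of_forall_apply_eq {R M₁ M₂ : Type*} [Semiring R] [AddCommMonoid M₁]
    [Module R M₁] [AddCommMonoid M₂] [Module R M₂] {W₁ : Submodule R M₁} {W₂ : Submodule R M₂}
    {f : W₁ ≃ₗ[R] W₂} {σ : M₁ →ₗ[R] M₂} (h : ∀ a : W₁, σ a = f a) : W₁.map σ = W₂ := by
  have hcomp : σ ∘ₗ W₁.subtype = W₂.subtype ∘ₗ f := LinearMap.ext h
  rw [← W₁.range_subtype, ← LinearMap.range_comp, hcomp, LinearMap.range_comp, f.range,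
    Submodule.map_top, W₂.range_subtype]

variable {R V₁ V₂ : Type*} [CommRing R] [AddCommGroup V₁] [Module R V₁] [AddCommGroup V₂]
  [Module R V₂] {B₁ : BilinForm R V₁} {B₂ : BilinForm R V₂} {W₁ : Submodule R V₁}
  {W₂ : Submodule R V₂}

theorem exists_isometryEquiv_of_isCompl_orthogonal (hB₁ : B₁.IsRefl) (hB₂ : B₂.IsRefl)
    (hW₁ : IsCompl W₁ (B₁.orthogonal W₁)) (hW₂ : IsCompl W₂ (B₂.orthogonal W₂))
    (f : (B₁.restrict W₁).IsometryEquiv (B₂.restrict W₂))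
    (g : (B₁.restrict (B₁.orthogonal W₁)).IsometryEquiv (B₂.restrict (B₂.orthogonal W₂))) :
    ∃ σ : B₁.IsometryEquiv B₂,
      (∀ a : W₁, σ a = f a) ∧ ∀ b : B₁.orthogonal W₁, σ b = g b := by
  let e₁ := Submodule.prodEquivOfIsCompl _ _ hW₁
  let e₂ := Submodule.prodEquivOfIsCompl _ _ hW₂
  let σ : V₁ ≃ₗ[R] V₂ := e₁.symm ≪≫ₗ f.toLinearEquiv.prodCongr g.toLinearEquiv ≪≫ₗ e₂
  have hσ (a : W₁) (b : B₁.orthogonal W₁) : σ (a + b) = f a + g b :=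
    congrArg (fun p : W₁ × B₁.orthogonal W₁ ↦ e₂ (f p.1, g p.2)) (e₁.symm_apply_apply (a, b))
  have hf (a c : W₁) : B₂ (f a) (f c) = B₁ a c := f.map_app c a
  have hg (b d : B₁.orthogonal W₁) : B₂ (g b) (g d) = B₁ b d := g.map_app d b
  have hisom (x y : V₁) : B₂ (σ x) (σ y) = B₁ x y := by
    obtain ⟨⟨a, b⟩, rfl⟩ := e₁.surjective x
    obtain ⟨⟨c, d⟩, rfl⟩ := e₁.surjective y
    change B₂ (σ (a + b)) (σ (c + d)) = B₁ (a + b) (c + d)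
    have had : B₁ a d = 0 := d.2 a a.2
    have hbc : B₁ b c = 0 := hB₁ _ _ (b.2 c c.2)
    have hfad : B₂ (f a) (g d) = 0 := (g d).2 (f a) (f a).2
    have hgbc : B₂ (g b) (f c) = 0 := hB₂ _ _ ((g b).2 (f c) (f c).2)
    simp only [hσ, map_add, LinearMap.add_apply, hf, hg, had, hbc, hfad, hgbc]
  have hσf (a : W₁) : σ a = f a := by simpa using hσ a 0
  have hσg (b : B₁.orthogonal W₁) : σ b = g b := by simpa using hσ 0 b
  exact ⟨⟨σ, hisom⟩, hσf, hσg⟩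

end Gluing

theorem apply_self_sub_eq_sub_of_orthogonal {R M : Type*} [CommRing R] [AddCommGroup M] [Module R M]
    {B : BilinForm R M} (hB : B.IsSymm) {x p : M} (hp : B p (x - p) = 0) :
    B (x - p) (x - p) = B x x - B p p := by
  have hpx : B p x - B p p = 0 := by simpa using hp
  simp only [map_sub, LinearMap.sub_apply, hB.eq x p]
  linear_combination -2 * hpx

theorem nondegenerate_restrict_orthogonal {K V : Type*} [Field K] [AddCommGroup V] [Module K V]
    [FiniteDimensional K V] {B : BilinForm K V} (hB : B.IsRefl) (hnd : B.Nondegenerate)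
    {W : Submodule K V} (hW : (B.restrict W).Nondegenerate) :
    (B.restrict (B.orthogonal W)).Nondegenerate := by
  refine B.nondegenerate_restrict_of_disjoint_orthogonal hB ?_
  rw [orthogonal_orthogonal hnd hB]
  exact (isCompl_orthogonal_of_restrict_nondegenerate hB hW).disjoint.symm

theorem exists_isometryEquiv_map_eq_and_apply_eq {K V₁ V₂ : Type*} [Field K] [IsAlgClosed K]
    [NeZero (2 : K)] [AddCommGroup V₁] [Module K V₁] [FiniteDimensional K V₁]
    [AddCommGroup V₂] [Module K V₂] [FiniteDimensional K V₂]
    {B₁ : BilinForm K V₁} {B₂ : BilinForm K V₂} (hB₁ : B₁.IsSymm) (hB₂ : B₂.IsSymm)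
    (hnd₁ : B₁.Nondegenerate) (hnd₂ : B₂.Nondegenerate)
    (hV : Module.finrank K V₁ = Module.finrank K V₂) {W₁ : Submodule K V₁} {W₂ : Submodule K V₂}
    (hW₁ : (B₁.restrict W₁).Nondegenerate) (hW₂ : (B₂.restrict W₂).Nondegenerate)
    (hW : Module.finrank K W₁ = Module.finrank K W₂)
    {p₁ : W₁} {p₂ : W₂} (hp : B₁ p₁ p₁ = B₂ p₂ p₂) (hp0 : p₁ = 0 ↔ p₂ = 0)
    {q₁ : B₁.orthogonal W₁} {q₂ : B₂.orthogonal W₂} (hq : B₁ q₁ q₁ = B₂ q₂ q₂)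
    (hq0 : q₁ = 0 ↔ q₂ = 0) :
    ∃ σ : B₁.IsometryEquiv B₂, W₁.map σ.toLinearEquiv.toLinearMap = W₂ ∧
      σ p₁ = p₂ ∧ σ q₁ = q₂ := by
  have hWperp : Module.finrank K (B₁.orthogonal W₁) = Module.finrank K (B₂.orthogonal W₂) := by
    rw [finrank_orthogonal hnd₁, finrank_orthogonal hnd₂, hV, hW]
  obtain ⟨f, hf⟩ := exists_isometryEquiv_apply_eq_of_finrank_eq (hB₁.restrict W₁)
    (hB₂.restrict W₂) hW₁.1 hW₂.1 hW hp hp0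
  obtain ⟨g, hg⟩ := exists_isometryEquiv_apply_eq_of_finrank_eq
    (hB₁.restrict (B₁.orthogonal W₁)) (hB₂.restrict (B₂.orthogonal W₂))
    (nondegenerate_restrict_orthogonal hB₁.isRefl hnd₁ hW₁).1
    (nondegenerate_restrict_orthogonal hB₂.isRefl hnd₂ hW₂).1 hWperp hq hq0
  obtain ⟨σ, hσf, hσg⟩ := exists_isometryEquiv_of_isCompl_orthogonal hB₁.isRefl hB₂.isRefl
    (isCompl_orthogonal_of_restrict_nondegenerate hB₁.isRefl hW₁)
    (isCompl_orthogonal_of_restrict_nondegenerate hB₂.isRefl hW₂) f g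
  exact ⟨σ, map_eq_of_forall_apply_eq (f := f.toLinearEquiv) hσf, by rw [hσf, hf],
    by rw [hσg, hg]⟩

end IsometryEquiv

theorem IsRegularSubspace.nondegenerate_restrict {V : Type*} [AddCommGroup V] [Module ℂ V]
    {B : LinearMap.BilinForm ℂ V} (hB : B.IsSymm) {W : Submodule ℂ V}
    (hW : IsRegularSubspace B W) : (B.restrict W).Nondegenerate :=
  (hB.restrict W).isRefl.nondegenerate_iff_separatingLeft.2 fun x hx ↦
    Subtype.ext (hW x x.2 fun y hy ↦ hx ⟨y, hy⟩)

theorem IsOrthProj.sub_mem_orthogonal {V : Type*} [AddCommGroup V] [Module ℂ V]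
    {B : LinearMap.BilinForm ℂ V} (hB : B.IsRefl) {W : Submodule ℂ V} {x y : V}
    (h : IsOrthProj B W x y) : x - y ∈ B.orthogonal W :=
  fun w hw ↦ hB _ _ (h.2 w hw)

theorem stabilizer_orbit_generic_projection_general {K V : Type*} [Field K] [IsAlgClosed K]
    [NeZero (2 : K)] [AddCommGroup V] [Module K V] [FiniteDimensional K V]
    {B : LinearMap.BilinForm K V} (hB : B.IsSymm) (hnd : B.Nondegenerate) {h : V}
    {W W' : Submodule K V} (hW : (B.restrict W).Nondegenerate)
    (hW' : (B.restrict W').Nondegenerate) (hdim : Module.finrank K W = Module.finrank K W')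
    {h' h'' : V} (hh' : h' ∈ W) (hperp' : h - h' ∈ B.orthogonal W)
    (hh'' : h'' ∈ W') (hperp'' : h - h'' ∈ B.orthogonal W') :
    (∃ σ : V ≃ₗ[K] V, (∀ x y, B (σ x) (σ y) = B x y) ∧ σ h = h ∧
        W.map (σ : V →ₗ[K] V) = W' ∧ σ h' = h'') ↔
      B h' h' = B h'' h'' ∧ (h' = 0 ↔ h'' = 0) ∧ (h' = h ↔ h'' = h) := by
  constructor
  · rintro ⟨σ, hσ, hσh, -, rfl⟩
    refine ⟨(hσ h' h').symm, σ.map_eq_zero_iff.symm, ?_⟩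
    rw [← σ.injective.eq_iff, hσh]
  · rintro ⟨hnorm, hzero, hfix⟩
    have hnorm_sub : B (h - h') (h - h') = B (h - h'') (h - h'') := by
      rw [apply_self_sub_eq_sub_of_orthogonal hB (hperp' h' hh'),
        apply_self_sub_eq_sub_of_orthogonal hB (hperp'' h'' hh''), hnorm]
    obtain ⟨σ, hσW, hσh', hσsub⟩ := exists_isometryEquiv_map_eq_and_apply_eq hB hB hnd hnd rfl
      hW hW' hdim (p₁ := ⟨h', hh'⟩) (p₂ := ⟨h'', hh''⟩) hnorm (by simpa using hzero)
      (q₁ := ⟨h - h', hperp'⟩) (q₂ := ⟨h - h'', hperp''⟩) hnorm_sub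
      (by simpa [sub_eq_zero, eq_comm (a := h)] using hfix)
    have hσh : σ h = h := by
      simpa [hσh', hσsub] using map_add σ h' (h - h')
    exact ⟨σ, fun x y ↦ σ.map_app y x, hσh, hσW, hσh'⟩

/-- for regular subspaces `𝔥', 𝔥''` of the same dimension with
projections `h' = P_{𝔥'}(h)`, `h'' = P_{𝔥''}(h)` neither `0` nor `h`, some element of
`O(𝔥)` fixing `h` maps `(𝔥', h')` onto `(𝔥'', h'')` iff `⟨h',h'⟩ = ⟨h'',h''⟩`. -/
theorem stabilizer_orbit_generic_projection
    {V : Type*} [AddCommGroup V] [Module ℂ V] [FiniteDimensional ℂ V]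
    (B : LinearMap.BilinForm ℂ V)
    (hsymm : ∀ x y, B x y = B y x) (hnd : B.Nondegenerate)
    (h : V) (W W' : Submodule ℂ V)
    (hW : IsRegularSubspace B W) (hW' : IsRegularSubspace B W')
    (hdim : Module.finrank ℂ W = Module.finrank ℂ W')
    (h' h'' : V) (hp' : IsOrthProj B W h h') (hp'' : IsOrthProj B W' h h'')
    (hne0' : h' ≠ 0) (hneh' : h' ≠ h) (hne0'' : h'' ≠ 0) (hneh'' : h'' ≠ h) :
    (∃ σ : V ≃ₗ[ℂ] V, (∀ x y, B (σ x) (σ y) = B x y) ∧ σ h = h ∧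
        W.map (σ : V →ₗ[ℂ] V) = W' ∧ σ h' = h'') ↔
      B h' h' = B h'' h'' := by
  have hrefl : B.IsRefl := LinearMap.BilinForm.IsSymm.isRefl ⟨hsymm⟩
  simpa [hne0', hne0'', hneh', hneh''] using stabilizer_orbit_generic_projection_general
    ⟨hsymm⟩ hnd (hW.nondegenerate_restrict ⟨hsymm⟩) (hW'.nondegenerate_restrict ⟨hsymm⟩) hdim
    hp'.1 (hp'.sub_mem_orthogonal hrefl) hp''.1 (hp''.sub_mem_orthogonal hrefl)
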